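/- arXiv:0802.0442 — 3 statements merged into one kernel-verified Lean document; each statement's English description precedes it below -/
import Mathlib

section
/- Let A be an infinitesimal Hopf algebra over a field K, with antipode S. Then for all a, b ∈ A, S(ab) = ε(a) S(b) + ε(b) S(a) − ε(a)ε(b) 1. In particular, S(ab) = 0 whenever ε(a) = ε(b) = 0, so S vanishes on (Ker ε)². -/
/-!
For fixed `a`, let `T b = S (a * b)`. Evaluating `S ⋆ id = ε 1` at `a * b` and expanding
`Δ (a * b)` by the compatibility gives
`(T ⋆ id) b = S a * b - ε a • b + (ε a * ε b) • 1` (`conv_mulLeft_id`), where `ε` is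
multiplicative by the same compatibility (`counit_mul`). Convolving on the right with `S` and
using associativity of `⋆` and `id ⋆ S = ε 1` yields
`T b = ε b • S a - (ε a * ε b) • 1 + ε a • S b`.
-/

open TensorProduct

/-- An infinitesimal bialgebra structure on an associative unital `K`-algebra `A`:
a coassociative counital coproduct `Δ` with counit `ε`, satisfying the compatibility
`Δ(ab) = Δ(a)(1⊗b) + (a⊗1)Δ(b) − a⊗b`. -/
structure InfBialgStr (K A : Type*) [Field K] [Ring A] [Algebra K A] where
  Δ : A →ₗ[K] A ⊗[K] A
  ε : A →ₗ[K] K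
  coassoc : ∀ a : A, (TensorProduct.assoc K A A A) (LinearMap.rTensor A Δ (Δ a))
      = LinearMap.lTensor A Δ (Δ a)
  counit_left : ∀ a : A, (TensorProduct.lid K A) (LinearMap.rTensor A ε (Δ a)) = a
  counit_right : ∀ a : A, (TensorProduct.rid K A) (LinearMap.lTensor A ε (Δ a)) = a
  compat : ∀ a b : A, Δ (a * b) = Δ a * (1 ⊗ₜ[K] b) + (a ⊗ₜ[K] 1) * Δ b - a ⊗ₜ[K] b

/-- The convolution product `f ⋆ g = m ∘ (f ⊗ g) ∘ Δ` on `Hom_K(A, A)`. -/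
noncomputable def conv {K A : Type*} [Field K] [Ring A] [Algebra K A]
    (B : InfBialgStr K A) (f g : A →ₗ[K] A) : A →ₗ[K] A :=
  LinearMap.mul' K A ∘ₗ TensorProduct.map f g ∘ₗ B.Δ

/-- `S` is an antipode for the infinitesimal bialgebra `A`: it is a two-sided inverse of
the identity in the convolution algebra, whose unit is `a ↦ ε(a) 1`. -/
def IsAntipode {K A : Type*} [Field K] [Ring A] [Algebra K A]
    (B : InfBialgStr K A) (S : A →ₗ[K] A) : Prop :=
  conv B S LinearMap.id = Algebra.linearMap K A ∘ₗ B.ε ∧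
  conv B LinearMap.id S = Algebra.linearMap K A ∘ₗ B.ε

section

variable {K A : Type*} [Field K] [Ring A] [Algebra K A] (B : InfBialgStr K A)

theorem conv_assoc (f g h : A →ₗ[K] A) : conv B (conv B f g) h = conv B f (conv B g h) := by
  -- Both sides are the same map `M` out of `A ⊗ (A ⊗ A)` applied to the two iterated coproducts.
  let M : A ⊗[K] (A ⊗[K] A) →ₗ[K] A :=
    LinearMap.mul' K A ∘ₗ TensorProduct.map f (LinearMap.mul' K A ∘ₗ TensorProduct.map g h)
  have h1 : ∀ t : A ⊗[K] A, LinearMap.mul' K A (TensorProduct.map (conv B f g) h t)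
      = M (TensorProduct.assoc K A A A (LinearMap.rTensor A B.Δ t)) := by
    intro t
    induction t with
    | zero => simp
    | add x y hx hy => simp only [map_add, hx, hy]
    | tmul x y =>
      simp only [TensorProduct.map_tmul, LinearMap.mul'_apply, LinearMap.rTensor_tmul, conv,
        LinearMap.comp_apply]
      generalize B.Δ x = u
      induction u with
      | zero => simp
      | add x y hx hy => simp only [map_add, add_mul, TensorProduct.add_tmul, hx, hy]
      | tmul p q => simp [M, mul_assoc]
  have h2 : ∀ t : A ⊗[K] A, LinearMap.mul' K A (TensorProduct.map f (conv B g h) t)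
      = M (LinearMap.lTensor A B.Δ t) := by
    intro t
    induction t with
    | zero => simp
    | add x y hx hy => simp only [map_add, hx, hy]
    | tmul x y => simp [M, conv]
  ext a
  exact (h1 (B.Δ a)).trans ((congrArg M (B.coassoc a)).trans (h2 (B.Δ a)).symm)

theorem conv_unit (f : A →ₗ[K] A) : conv B f (Algebra.linearMap K A ∘ₗ B.ε) = f := by
  have h : ∀ t : A ⊗[K] A,
      LinearMap.mul' K A (TensorProduct.map f (Algebra.linearMap K A ∘ₗ B.ε) t)
        = f (TensorProduct.rid K A (LinearMap.lTensor A B.ε t)) := by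
    intro t
    induction t with
    | zero => simp
    | add x y hx hy => simp only [map_add, hx, hy]
    | tmul x y => simp [Algebra.algebraMap_eq_smul_one]
  ext a
  exact (h (B.Δ a)).trans (congrArg f (B.counit_right a))

/-- Applying `ε ⊗ ε` to the compatibility gives `ε (ab) = ε (ab) + ε (ab) - ε a * ε b`. -/
theorem counit_mul (a b : A) : B.ε (a * b) = B.ε a * B.ε b := by
  let E : A ⊗[K] A →ₗ[K] K := LinearMap.mul' K K ∘ₗ TensorProduct.map B.ε B.ε
  have hl : ∀ t : A ⊗[K] A, E (t * (1 ⊗ₜ[K] b))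
      = B.ε (TensorProduct.lid K A (LinearMap.rTensor A B.ε t) * b) := by
    intro t
    induction t with
    | zero => simp
    | add x y hx hy => simp only [map_add, add_mul, hx, hy]
    | tmul x y => simp [E]
  have hr : ∀ t : A ⊗[K] A, E ((a ⊗ₜ[K] 1) * t)
      = B.ε (a * TensorProduct.rid K A (LinearMap.lTensor A B.ε t)) := by
    intro t
    induction t with
    | zero => simp
    | add x y hx hy => simp only [map_add, mul_add, hx, hy]
    | tmul x y => simp [E, mul_comm]
  have h0 : ∀ t : A ⊗[K] A, E t = B.ε (TensorProduct.lid K A (LinearMap.rTensor A B.ε t)) := by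
    intro t
    induction t with
    | zero => simp
    | add x y hx hy => simp only [map_add, hx, hy]
    | tmul x y => simp [E]
  have h := congrArg E (B.compat a b)
  rw [map_sub, map_add, hl, hr, h0, B.counit_left, B.counit_left, B.counit_right] at h
  have hE : E (a ⊗ₜ[K] b) = B.ε a * B.ε b := by simp [E]
  rw [hE] at h
  linear_combination -h

theorem mulLeft_conv (c : A) (f g : A →ₗ[K] A) :
    conv B (LinearMap.mulLeft K c ∘ₗ f) g = LinearMap.mulLeft K c ∘ₗ conv B f g := by
  have h : ∀ t : A ⊗[K] A,
      LinearMap.mul' K A (TensorProduct.map (LinearMap.mulLeft K c ∘ₗ f) g t)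
        = c * LinearMap.mul' K A (TensorProduct.map f g t) := by
    intro t
    induction t with
    | zero => simp
    | add x y hx hy => simp only [map_add, mul_add, hx, hy]
    | tmul x y => simp [mul_assoc]
  ext a
  exact h (B.Δ a)

/-- The identity `S ⋆ id = ε 1` evaluated at a product `a * b`, as an identity in `b`. -/
theorem conv_mulLeft_id (S : A →ₗ[K] A)
    (hS : conv B S LinearMap.id = Algebra.linearMap K A ∘ₗ B.ε) (a : A) :
    conv B (S ∘ₗ LinearMap.mulLeft K a) LinearMap.id
      = LinearMap.mulLeft K (S a - algebraMap K A (B.ε a)) ∘ₗ LinearMap.id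
        + B.ε a • (Algebra.linearMap K A ∘ₗ B.ε) := by
  ext b
  let N : A ⊗[K] A →ₗ[K] A := LinearMap.mul' K A ∘ₗ TensorProduct.map S LinearMap.id
  have hN : ∀ x, N (B.Δ x) = algebraMap K A (B.ε x) := fun x => LinearMap.congr_fun hS x
  have hl : ∀ t : A ⊗[K] A, N (t * (1 ⊗ₜ[K] b)) = N t * b := by
    intro t
    induction t with
    | zero => simp
    | add x y hx hy => simp only [map_add, add_mul, hx, hy]
    | tmul x y => simp [N, mul_assoc]
  have hr : ∀ t : A ⊗[K] A, N ((a ⊗ₜ[K] 1) * t)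
      = LinearMap.mul' K A
          (TensorProduct.map (S ∘ₗ LinearMap.mulLeft K a) LinearMap.id t) := by
    intro t
    induction t with
    | zero => simp
    | add x y hx hy => simp only [map_add, mul_add, hx, hy]
    | tmul x y => simp [N]
  have h := congrArg N (B.compat a b)
  have hab : N (a ⊗ₜ[K] b) = S a * b := by simp [N]
  rw [map_sub, map_add, hl, hr, hN, hN, hab, counit_mul, map_mul] at h
  change LinearMap.mul' K A
    (TensorProduct.map (S ∘ₗ LinearMap.mulLeft K a) LinearMap.id (B.Δ b)) = _
  simp only [LinearMap.add_apply, LinearMap.comp_apply, LinearMap.mulLeft_apply,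
    LinearMap.id_apply, LinearMap.smul_apply, Algebra.linearMap_apply, sub_mul]
  rw [Algebra.smul_def, h]
  abel

theorem conv_add_smul_left (f g h : A →ₗ[K] A) (c : K) :
    conv B (f + c • g) h = conv B f h + c • conv B g h := by
  ext a
  simp [conv, TensorProduct.map_add_left, TensorProduct.map_smul_left]

theorem unit_conv (f : A →ₗ[K] A) : conv B (Algebra.linearMap K A ∘ₗ B.ε) f = f := by
  have h : ∀ t : A ⊗[K] A,
      LinearMap.mul' K A (TensorProduct.map (Algebra.linearMap K A ∘ₗ B.ε) f t)
        = f (TensorProduct.lid K A (LinearMap.rTensor A B.ε t)) := by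
    intro t
    induction t with
    | zero => simp
    | add x y hx hy => simp only [map_add, hx, hy]
    | tmul x y => simp [Algebra.algebraMap_eq_smul_one]
  ext a
  exact (h (B.Δ a)).trans (congrArg f (B.counit_left a))

end

/-- In an infinitesimal Hopf algebra `A` with antipode `S`:
`S(ab) = ε(a) S(b) + ε(b) S(a) − ε(a)ε(b) 1` for all `a, b`; in particular `S(ab) = 0`
whenever `ε(a) = ε(b) = 0`, so `S` vanishes on `(Ker ε)²`. -/
theorem antipode_of_product (K A : Type*) [Field K] [Ring A] [Algebra K A]
    (B : InfBialgStr K A) (S : A →ₗ[K] A) (hS : IsAntipode B S) :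
    (∀ a b : A, S (a * b) = B.ε a • S b + B.ε b • S a - (B.ε a * B.ε b) • (1 : A)) ∧
    (∀ a b : A, B.ε a = 0 → B.ε b = 0 → S (a * b) = 0) ∧
    (∀ x ∈ Submodule.span K {z : A | ∃ a b : A, B.ε a = 0 ∧ B.ε b = 0 ∧ z = a * b},
      S x = 0) := by
  have key : ∀ a b : A,
      S (a * b) = B.ε a • S b + B.ε b • S a - (B.ε a * B.ε b) • (1 : A) := by
    intro a b
    have h : conv B (conv B (S ∘ₗ LinearMap.mulLeft K a) LinearMap.id) S
        = S ∘ₗ LinearMap.mulLeft K a := by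
      rw [conv_assoc, hS.2, conv_unit]
    rw [conv_mulLeft_id B S hS.1, conv_add_smul_left, mulLeft_conv, hS.2, unit_conv] at h
    have hb := LinearMap.congr_fun h b
    simp only [LinearMap.add_apply, LinearMap.comp_apply, LinearMap.mulLeft_apply,
      LinearMap.smul_apply, Algebra.linearMap_apply, sub_mul, ← Algebra.commutes (B.ε b) (S a),
      ← map_mul] at hb
    rw [← hb, Algebra.smul_def (B.ε b) (S a), ← Algebra.algebraMap_eq_smul_one]
    abel
  have hker : ∀ a b : A, B.ε a = 0 → B.ε b = 0 → S (a * b) = 0 := by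
    intro a b ha hb
    simp [key, ha, hb]
  refine ⟨key, hker, fun x hx => ?_⟩
  have hle : Submodule.span K {z : A | ∃ a b : A, B.ε a = 0 ∧ B.ε b = 0 ∧ z = a * b}
      ≤ LinearMap.ker S := by
    rw [Submodule.span_le]
    rintro _ ⟨a, b, ha, hb, rfl⟩
    exact hker a b ha hb
  exact hle hx
end

section
/- Let A be an infinitesimal Hopf algebra over a field K, with antipode S. Then for all a ∈ A, Δ(S(a)) = S(a) ⊗ 1 + 1 ⊗ S(a) − ε(a) 1 ⊗ 1. In particular, S(a) is a primitive element of A whenever ε(a) = 0. -/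
/-!
The identity is obtained in the convolution ring `Hom_K(A, A ⊗ A)`, whose unit is
`a ↦ ε(a) 1 ⊗ 1`. Put `i(a) = a ⊗ 1`, `j(a) = 1 ⊗ a`, `L = i ∘ S`, `T = j ∘ S` and `X = Δ ∘ S`.
Since `i` and `j` are algebra maps, `L ⋆ i = 1` and `j ⋆ T = 1`; moreover `Δ = i ⋆ j`.
Applying `Δ` to `S ⋆ id = ε 1` and expanding by the compatibility of `Δ` with products gives
`X ⋆ j + L ⋆ Δ - L ⋆ j = 1`, because `Δ(1) = 1 ⊗ 1`. Here `L ⋆ Δ = L ⋆ i ⋆ j = j`, so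
`(X + 1 - L) ⋆ j = 1`. Right convolution with `T` yields `X + 1 - L = T`, which is the claim.
-/

open TensorProduct

open WithConv

/-- The Mathlib coalgebra underlying an infinitesimal bialgebra; it makes the convolution ring
structure on `WithConv (A →ₗ[K] R)` available for every `K`-algebra `R`. -/
@[reducible]
def InfBialgStr.toCoalgebra {K A : Type*} [Field K] [Ring A] [Algebra K A]
    (B : InfBialgStr K A) : Coalgebra K A where
  comul := B.Δ
  counit := B.ε
  coassoc := LinearMap.ext B.coassoc
  rTensor_counit_comp_comul := by
    ext a
    apply (TensorProduct.lid K A).injective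
    simpa using B.counit_left a
  lTensor_counit_comp_comul := by
    ext a
    apply (TensorProduct.rid K A).injective
    simpa using B.counit_right a

theorem InfBialgStr.Δ_one {K A : Type*} [Field K] [Ring A] [Algebra K A]
    (B : InfBialgStr K A) : B.Δ 1 = 1 ⊗ₜ[K] 1 := by
  have h := B.compat 1 1
  rw [← Algebra.TensorProduct.one_def, mul_one, mul_one, one_mul] at h
  rw [← Algebra.TensorProduct.one_def]
  -- `h` now reads `Δ 1 = Δ 1 + Δ 1 - 1`.
  have h2 := congrArg (fun x => 1 + x - B.Δ 1) h
  simpa using h2.symm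

/-- In an infinitesimal Hopf algebra `A` with antipode `S`:
`Δ(S(a)) = S(a) ⊗ 1 + 1 ⊗ S(a) − ε(a) 1 ⊗ 1` for all `a`; in particular `S(a)` is a
primitive element whenever `ε(a) = 0`. -/
theorem coproduct_of_antipode (K A : Type*) [Field K] [Ring A] [Algebra K A]
    (B : InfBialgStr K A) (S : A →ₗ[K] A) (hS : IsAntipode B S) :
    (∀ a : A, B.Δ (S a) = S a ⊗ₜ[K] 1 + 1 ⊗ₜ[K] S a - B.ε a • ((1 : A) ⊗ₜ[K] (1 : A))) ∧
    (∀ a : A, B.ε a = 0 → B.Δ (S a) = S a ⊗ₜ[K] 1 + 1 ⊗ₜ[K] S a) := by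
  let _ : Coalgebra K A := B.toCoalgebra
  obtain ⟨h₁, h₂⟩ := hS
  let iHom : A →ₐ[K] A ⊗[K] A := Algebra.TensorProduct.includeLeft
  let jHom : A →ₐ[K] A ⊗[K] A := Algebra.TensorProduct.includeRight
  let i : WithConv (A →ₗ[K] A ⊗[K] A) := toConv iHom.toLinearMap
  let j : WithConv (A →ₗ[K] A ⊗[K] A) := toConv jHom.toLinearMap
  let L : WithConv (A →ₗ[K] A ⊗[K] A) := toConv (iHom.toLinearMap ∘ₗ S)
  let T : WithConv (A →ₗ[K] A ⊗[K] A) := toConv (jHom.toLinearMap ∘ₗ S)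
  let X : WithConv (A →ₗ[K] A ⊗[K] A) := toConv (B.Δ ∘ₗ S)
  let D : WithConv (A →ₗ[K] A ⊗[K] A) := toConv B.Δ
  have hLi : L * i = 1 := by
    have h := LinearMap.algHom_comp_convMul_distrib iHom (toConv S) (toConv LinearMap.id)
    change iHom.toLinearMap ∘ₗ conv B S LinearMap.id = (L * i).ofConv at h
    rw [h₁] at h
    ext a
    have ha := LinearMap.congr_fun h a
    refine ha.symm.trans ?_
    exact iHom.commutes (B.ε a)
  have hjT : j * T = 1 := by
    have h := LinearMap.algHom_comp_convMul_distrib jHom (toConv LinearMap.id) (toConv S)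
    change jHom.toLinearMap ∘ₗ conv B LinearMap.id S = (j * T).ofConv at h
    rw [h₂] at h
    ext a
    have ha := LinearMap.congr_fun h a
    refine ha.symm.trans ?_
    exact jHom.commutes (B.ε a)
  have hij : i * j = D := by
    have h : LinearMap.mul' K (A ⊗[K] A) ∘ₗ TensorProduct.map iHom.toLinearMap jHom.toLinearMap
        = LinearMap.id := by
      ext x y
      simp [iHom, jHom]
    ext a
    exact LinearMap.congr_fun h (B.Δ a)
  have hX : X * j + L * D - L * j = 1 := by
    -- the compatibility axiom with `a` replaced by `S a`, as an identity of maps on `A ⊗ A`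
    have h : B.Δ ∘ₗ LinearMap.mul' K A ∘ₗ TensorProduct.map S LinearMap.id
        = LinearMap.mul' K (A ⊗[K] A) ∘ₗ TensorProduct.map X.ofConv j.ofConv
          + LinearMap.mul' K (A ⊗[K] A) ∘ₗ TensorProduct.map L.ofConv D.ofConv
          - LinearMap.mul' K (A ⊗[K] A) ∘ₗ TensorProduct.map L.ofConv j.ofConv := by
      ext x y
      simp [X, j, L, D, iHom, jHom, B.compat]
    ext a
    have ha := LinearMap.congr_fun h (B.Δ a)
    refine ha.symm.trans ?_
    have hc : (LinearMap.mul' K A) (TensorProduct.map S LinearMap.id (B.Δ a))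
        = algebraMap K A (B.ε a) := LinearMap.congr_fun h₁ a
    change B.Δ ((LinearMap.mul' K A) (TensorProduct.map S LinearMap.id (B.Δ a)))
      = algebraMap K (A ⊗[K] A) (B.ε a)
    rw [hc, Algebra.algebraMap_eq_smul_one, map_smul, B.Δ_one, Algebra.algebraMap_eq_smul_one,
      Algebra.TensorProduct.one_def]
  have hLD : L * D = j := by rw [← hij, ← mul_assoc, hLi, one_mul]
  have hXj : (X + 1 - L) * j = 1 := by
    rw [sub_mul, add_mul, one_mul]
    rwa [hLD] at hX
  -- a left and a right inverse of `j` coincide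
  have hXT : X + 1 - L = T := left_inv_eq_right_inv hXj hjT
  have main : ∀ a : A, B.Δ (S a)
      = S a ⊗ₜ[K] 1 + 1 ⊗ₜ[K] S a - B.ε a • ((1 : A) ⊗ₜ[K] (1 : A)) := by
    intro a
    have ha : B.Δ (S a) + algebraMap K (A ⊗[K] A) (B.ε a) - S a ⊗ₜ[K] 1 = 1 ⊗ₜ[K] S a :=
      congrArg (fun f : WithConv (A →ₗ[K] A ⊗[K] A) => f.ofConv a) hXT
    rw [Algebra.algebraMap_eq_smul_one, Algebra.TensorProduct.one_def] at ha
    rw [← ha]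
    abel
  refine ⟨main, fun a ha => ?_⟩
  rw [main a, ha, zero_smul, sub_zero]
end

section
/- The bijection η : 𝐓_b → 𝐅, defined inductively by η(|) = 1 and η(t₁∨t₂) = B⁺(η(t₁)) η(t₂), is an isomorphism of posets from the Tamari poset of planar binary trees to the poset (𝐅, ≤) of planar forests: for all planar binary trees t₁, t₂, one has t₁ ≤ t₂ in the Tamari order if and only if η(t₁) ≤ η(t₂) in 𝐅. -/
/-!
Under `η`, a single Tamari rotation corresponds exactly to a single admissible transformation, so
the generated orders correspond as well. The rotation `(t₁∨t₂)∨t₃ → t₁∨(t₂∨t₃)` at the root becomes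
`B⁺(B⁺(η t₁) η t₂) η t₃ → B⁺(η t₁) B⁺(η t₂) η t₃`, which moves the leftmost child of the first root
to its left. A rotation in the left subtree acts below the first root, and a rotation in the right
subtree acts on the remaining trees of the forest; a transformation at an arbitrary place of the
forest is reached by finitely many such descents.
-/

/-- A planar rooted tree: a root together with a finite ordered list of planar rooted trees. -/
inductive PTree : Type
  | node : List PTree → PTree

/-- An admissible transformation of planar forests: pick a vertex `s` which is the leftmost
child of its parent `m`, and move `s` (together with its subtree) so that it becomes either
the child of the parent of `m` immediately to the left of `m` (first kind, obtained from
`congr` and `split`), or a new root-level tree immediately to the left of the tree of `m`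
when `m` is a root (second kind, `split` at the top level). -/
inductive FStep : List PTree → List PTree → Prop
  | split (xs : List PTree) (s : PTree) (sl : List PTree) (ys : List PTree) :
      FStep (xs ++ PTree.node (s :: sl) :: ys) (xs ++ s :: PTree.node sl :: ys)
  | congr (xs ys : List PTree) (l l' : List PTree) :
      FStep l l' → FStep (xs ++ PTree.node l :: ys) (xs ++ PTree.node l' :: ys)

/-- The partial order `≤` on planar forests generated by the admissible transformations:
`F ≤ G` iff `G` is obtained from `F` by finitely many admissible transformations. -/
def ForestLe : List PTree → List PTree → Prop := Relation.ReflTransGen FStep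

/-- A planar binary tree: either the single leaf `|`, or `t₁ ∨ t₂`, the grafting of two
planar binary trees on a common root. -/
inductive BTree : Type
  | leaf : BTree
  | node : BTree → BTree → BTree

/-- One Tamari rotation `(t₁∨t₂)∨t₃ → t₁∨(t₂∨t₃)`, applied in any subtree. -/
inductive TStep : BTree → BTree → Prop
  | rot (t₁ t₂ t₃ : BTree) :
      TStep (.node (.node t₁ t₂) t₃) (.node t₁ (.node t₂ t₃))
  | left {a b : BTree} (c : BTree) : TStep a b → TStep (.node a c) (.node b c)
  | right {a b : BTree} (c : BTree) : TStep a b → TStep (.node c a) (.node c b)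

/-- The Tamari order on planar binary trees, generated by the local rotation
`(t₁∨t₂)∨t₃ → t₁∨(t₂∨t₃)`. -/
def TamariLe : BTree → BTree → Prop := Relation.ReflTransGen TStep

/-- The bijection `η` from planar binary trees to planar forests:
`η(|) = 1` and `η(t₁∨t₂) = B⁺(η(t₁)) η(t₂)`. -/
def eta : BTree → List PTree
  | .leaf => []
  | .node t₁ t₂ => PTree.node (eta t₁) :: eta t₂

theorem eta_injective : Function.Injective eta := by
  intro a
  induction a with
  | leaf => intro b h; cases b <;> simp_all [eta]
  | node a₁ a₂ ih₁ ih₂ =>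
    intro b h
    cases b with
    | leaf => simp [eta] at h
    | node b₁ b₂ =>
      simp only [eta, List.cons.injEq, PTree.node.injEq] at h
      rw [ih₁ h.1, ih₂ h.2]

theorem exists_eta_eq : ∀ F : List PTree, ∃ t, eta t = F
  | [] => ⟨.leaf, rfl⟩
  | PTree.node l :: F => by
    obtain ⟨t₁, h₁⟩ := exists_eta_eq l
    obtain ⟨t₂, h₂⟩ := exists_eta_eq F
    exact ⟨.node t₁ t₂, by rw [eta, h₁, h₂]⟩

theorem FStep.cons (x : PTree) {F G : List PTree} (h : FStep F G) : FStep (x :: F) (x :: G) := by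
  cases h with
  | split xs s sl ys => exact FStep.split (x :: xs) s sl ys
  | congr xs ys l l' h => exact FStep.congr (x :: xs) ys l l' h

theorem TStep.fStep_eta {a b : BTree} (h : TStep a b) : FStep (eta a) (eta b) := by
  induction h with
  | rot t₁ t₂ t₃ => exact FStep.split [] (.node (eta t₁)) (eta t₂) (eta t₃)
  | left c _ ih => exact FStep.congr [] (eta c) _ _ ih
  | right c _ ih => exact ih.cons _

/-- Tamari steps between preimages persist when the same trees are added on the left of both
forests, since these trees only put the binary trees in a right subtree. -/
theorem exists_tStep_append (xs : List PTree) {F G : List PTree}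
    (h : ∃ a b, eta a = F ∧ eta b = G ∧ TStep a b) :
    ∃ a b, eta a = xs ++ F ∧ eta b = xs ++ G ∧ TStep a b := by
  induction xs with
  | nil => exact h
  | cons x xs ih =>
    obtain ⟨a, b, ha, hb, hab⟩ := ih
    obtain ⟨l⟩ := x
    obtain ⟨c, rfl⟩ := exists_eta_eq l
    exact ⟨.node c a, .node c b, by simp [eta, ha], by simp [eta, hb], .right c hab⟩

theorem FStep.exists_tStep {F G : List PTree} (h : FStep F G) :
    ∃ a b, eta a = F ∧ eta b = G ∧ TStep a b := by
  induction h with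
  | split xs s sl ys =>
    obtain ⟨l⟩ := s
    obtain ⟨t₁, rfl⟩ := exists_eta_eq l
    obtain ⟨t₂, rfl⟩ := exists_eta_eq sl
    obtain ⟨t₃, rfl⟩ := exists_eta_eq ys
    exact exists_tStep_append xs ⟨_, _, rfl, rfl, .rot t₁ t₂ t₃⟩
  | congr xs ys l l' _ ih =>
    obtain ⟨a, b, rfl, rfl, hab⟩ := ih
    obtain ⟨c, rfl⟩ := exists_eta_eq ys
    exact exists_tStep_append xs ⟨_, _, rfl, rfl, .left c hab⟩

theorem tamariLe_of_forestLe {F G : List PTree} (h : ForestLe F G) :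
    ∀ a b, eta a = F → eta b = G → TamariLe a b := by
  induction h with
  | refl =>
    rintro a b rfl h
    rw [eta_injective h]
    exact .refl
  | tail _ hstep ih =>
    intro a b ha hb
    obtain ⟨c, d, hc, hd, hcd⟩ := hstep.exists_tStep
    obtain rfl := eta_injective (hd.trans hb.symm)
    exact (ih a c ha hc).tail hcd

/-- `η` is an isomorphism of posets from the Tamari poset of planar binary trees to the
poset of planar forests: it is a bijection, and `t₁ ≤ t₂` in the Tamari order iff
`η(t₁) ≤ η(t₂)` in the poset of planar forests. -/
theorem eta_poset_isomorphism :
    Function.Bijective eta ∧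
    ∀ t₁ t₂ : BTree, TamariLe t₁ t₂ ↔ ForestLe (eta t₁) (eta t₂) := by
  refine ⟨⟨eta_injective, exists_eta_eq⟩, fun t₁ t₂ => ⟨fun h => ?_, fun h => ?_⟩⟩
  · exact Relation.ReflTransGen.lift eta (fun _ _ => TStep.fStep_eta) _ _ h
  · exact tamariLe_of_forestLe h t₁ t₂ rfl rfl
end
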